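/- (1) If 1/6 < a < 1/4 and 0 < σ < 1, then Z(σ,a) < 0 and P(σ,a) < 0. (2) If 0 < a < 1/6, then each of the functions σ ↦ Z(σ,a) and σ ↦ P(σ,a) has exactly one zero in the open interval (0,1), and that zero is simple; moreover these two zeros β_Z(a), β_P(a) satisfy β_Z(a) = 1 − β_P(a). -/

import Mathlib

open HurwitzZeta Complex

/-- `Z(s,a) = ζ(s,a) + ζ(s,1−a)`. -/
noncomputable def Zf (a : ℝ) : ℂ → ℂ :=
  fun s => hurwitzZeta a s + hurwitzZeta (1 - a : ℝ) s

/-- `P(s,a) = Li_s(e^{2πia}) + Li_s(e^{2πi(1−a)})`. -/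
noncomputable def Pf (a : ℝ) : ℂ → ℂ :=
  fun s => expZeta a s + expZeta (1 - a : ℝ) s

open Filter Topology MeasureTheory Asymptotics

/-- the Mellin kernel -/
noncomputable def gk (c t : ℝ) : ℝ :=
  (c * Real.exp (-t) - Real.exp (-t) ^ 2) / (1 - 2 * c * Real.exp (-t) + Real.exp (-t) ^ 2)

lemma gk_den {c : ℝ} (h0 : 0 < c) (h1 : c < 1) (x : ℝ) :
    1 - c ^ 2 ≤ 1 - 2 * c * x + x ^ 2 := by nlinarith [sq_nonneg (x - c)]

lemma gk_den_pos {c : ℝ} (h0 : 0 < c) (h1 : c < 1) (x : ℝ) :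
    0 < 1 - 2 * c * x + x ^ 2 := by nlinarith [sq_nonneg (x - c)]

lemma gk_cont {c : ℝ} (h0 : 0 < c) (h1 : c < 1) : Continuous (gk c) := by
  unfold gk
  refine Continuous.div (by fun_prop) (by fun_prop) fun t => (gk_den_pos h0 h1 _).ne'

lemma gk_bound {c : ℝ} (h0 : 0 < c) (h1 : c < 1) {t : ℝ} (ht : 0 ≤ t) :
    |gk c t| ≤ (1 / (1 - c ^ 2)) * Real.exp (-t) := by
  have hx : 0 < Real.exp (-t) := Real.exp_pos _
  have hx1 : Real.exp (-t) ≤ 1 := Real.exp_le_one_iff.2 (by linarith)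
  have hc : 0 < 1 - c ^ 2 := by nlinarith
  unfold gk
  set x := Real.exp (-t)
  rw [abs_div, abs_of_pos (gk_den_pos h0 h1 x), div_le_iff₀ (gk_den_pos h0 h1 x)]
  have h2 : |c * x - x ^ 2| ≤ x := by
    rw [abs_le]; constructor <;> nlinarith
  have h3 : 1 ≤ 1 / (1 - c ^ 2) * (1 - 2 * c * x + x ^ 2) := by
    rw [div_mul_eq_mul_div, one_mul, le_div_iff₀ hc, one_mul]
    exact gk_den h0 h1 x
  nlinarith

lemma gk_top {c : ℝ} (h0 : 0 < c) (h1 : c < 1) (r : ℝ) :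
    (fun t => (gk c t : ℂ)) =O[atTop] (fun t : ℝ => t ^ (-r)) := by
  have h : (fun t => (gk c t : ℂ)) =O[atTop] (fun t : ℝ => Real.exp (-1 * t)) := by
    refine IsBigO.of_bound (1 / (1 - c ^ 2)) ?_
    filter_upwards [eventually_ge_atTop 0] with t ht
    rw [Complex.norm_real, Real.norm_eq_abs, Real.norm_eq_abs, Real.abs_exp, neg_one_mul]
    exact gk_bound h0 h1 ht
  exact h.trans (isLittleO_exp_neg_mul_rpow_atTop one_pos _).isBigO

lemma gk_bot {c : ℝ} (h0 : 0 < c) (h1 : c < 1) :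
    (fun t => (gk c t : ℂ)) =O[𝓝[>] 0] (fun t : ℝ => t ^ (-(0:ℝ))) := by
  simp only [neg_zero, Real.rpow_zero]
  refine IsBigO.of_bound (1 / (1 - c ^ 2)) ?_
  have hc : 0 < 1 - c ^ 2 := by nlinarith
  filter_upwards [self_mem_nhdsWithin] with t ht
  have ht' : (0:ℝ) < t := ht
  rw [Complex.norm_real, Real.norm_eq_abs, norm_one]
  refine (gk_bound h0 h1 ht'.le).trans ?_
  gcongr
  exact Real.exp_le_one_iff.2 (by linarith)

lemma gk_loc {c : ℝ} (h0 : 0 < c) (h1 : c < 1) :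
    LocallyIntegrableOn (fun t => (gk c t : ℂ)) (Set.Ioi 0) :=
  ((Complex.continuous_ofReal.comp (gk_cont h0 h1)).locallyIntegrable).locallyIntegrableOn _

lemma gk_deriv {c : ℝ} (h0 : 0 < c) (h1 : c < 1) {s : ℂ} (hs : 0 < s.re) :
    MellinConvergent (fun t => Real.log t • (gk c t : ℂ)) s ∧
      HasDerivAt (mellin (fun t => (gk c t : ℂ)))
        (mellin (fun t => Real.log t • (gk c t : ℂ)) s) s :=
  mellin_hasDerivAt_of_isBigO_rpow (gk_loc h0 h1) (gk_top h0 h1 (s.re + 1)) (lt_add_one _)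
    (gk_bot h0 h1) hs

lemma gk_conv {c : ℝ} (h0 : 0 < c) (h1 : c < 1) {s : ℂ} (hs : 0 < s.re) :
    MellinConvergent (fun t => (gk c t : ℂ)) s :=
  mellinConvergent_of_isBigO_rpow (gk_loc h0 h1) (gk_top h0 h1 (s.re + 1)) (lt_add_one _)
    (gk_bot h0 h1) hs

lemma gk_hasSum {θ t : ℝ} (ht : 0 < t) :
    HasSum (fun n : ℕ => Real.cos (θ * (n + 1)) * Real.exp (-(n + 1 : ℝ) * t))
      (gk (Real.cos θ) t) := by
  set w : ℂ := Complex.exp (⟨-t, θ⟩ : ℂ) with hw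
  have hwn : ‖w‖ = Real.exp (-t) := by rw [hw, Complex.norm_exp]
  have hx1 : Real.exp (-t) < 1 := by rw [Real.exp_lt_one_iff]; linarith
  have h1 := (hasSum_geometric_of_norm_lt_one (hwn ▸ hx1 : ‖w‖ < 1)).mul_left w
  have h2 := Complex.hasSum_re h1
  have hwre : w.re = Real.exp (-t) * Real.cos θ := by rw [hw, Complex.exp_re]
  have hwim : w.im = Real.exp (-t) * Real.sin θ := by rw [hw, Complex.exp_im]
  convert h2 using 1
  · ext n
    rw [← pow_succ', hw, ← Complex.exp_nat_mul, Complex.exp_re]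
    have e1 : (((n + 1 : ℕ) : ℂ) * (⟨-t, θ⟩ : ℂ)).re = -(n + 1 : ℝ) * t := by
      rw [← Complex.ofReal_natCast, Complex.re_ofReal_mul]; push_cast; ring
    have e2 : (((n + 1 : ℕ) : ℂ) * (⟨-t, θ⟩ : ℂ)).im = θ * (n + 1) := by
      rw [← Complex.ofReal_natCast, Complex.im_ofReal_mul]; push_cast; ring
    rw [e1, e2, mul_comm]
  · have hd : Complex.normSq (1 - w) = 1 - 2 * Real.cos θ * Real.exp (-t) + Real.exp (-t) ^ 2 := by
      rw [Complex.normSq_apply]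
      simp only [Complex.sub_re, Complex.sub_im, Complex.one_re, Complex.one_im, hwre, hwim]
      linear_combination (Real.exp (-t)) ^ 2 * Real.sin_sq_add_cos_sq θ
    rw [Complex.mul_re, Complex.inv_re, Complex.inv_im, hd, gk]
    simp only [Complex.sub_re, Complex.sub_im, Complex.one_re, Complex.one_im, hwre, hwim]
    rw [← mul_div_assoc, ← mul_div_assoc, ← sub_div]
    congr 1
    linear_combination (Real.exp (-t)) ^ 2 * Real.sin_sq_add_cos_sq θ

lemma mellin_gk_of_one_lt {a : ℝ} {s : ℂ} (hs : 1 < s.re) :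
    mellin (fun t => (gk (Real.cos (2 * Real.pi * a)) t : ℂ)) s = Gamma s * cosZeta a s := by
  have h := hasSum_mellin (ι := ℕ) (a := fun n => ((Real.cos (2 * Real.pi * a * (n + 1)) : ℝ) : ℂ))
    (p := fun n => (n + 1 : ℝ)) (F := fun t => (gk (Real.cos (2 * Real.pi * a)) t : ℂ)) (s := s)
    (fun n => Or.inr (by positivity)) (by linarith)
    (fun t ht => by
      have := (Complex.hasSum_ofReal (L := SummationFilter.unconditional ℕ)).2
        (gk_hasSum (θ := 2 * Real.pi * a) (t := t) ht)
      push_cast at this ⊢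
      exact this)
    (by
      have hsum := (summable_nat_add_iff 1).2 (Real.summable_one_div_nat_rpow.2 hs)
      refine Summable.of_nonneg_of_le (fun n => by positivity) (fun n => ?_) hsum
      have hcos : ‖((Real.cos (2 * Real.pi * a * (n + 1)) : ℝ) : ℂ)‖ ≤ 1 := by
        rw [Complex.norm_real]
        exact Real.abs_cos_le_one _
      rw [Nat.cast_add_one]
      gcongr)
  have h2 := (hasSum_nat_cosZeta a hs).mul_left (Gamma s)
  rw [← hasSum_nat_add_iff' 1] at h2
  have hs0 : s ≠ 0 := by rintro rfl; simp at hs; linarith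
  simp only [Finset.sum_range_one, Nat.cast_zero, Complex.zero_cpow hs0, div_zero, mul_zero,
    sub_zero] at h2
  refine HasSum.unique ?_ h2
  refine h.congr_fun fun n => ?_
  push_cast
  ring

lemma coe_ne_zero' {a : ℝ} (h0 : 0 < a) (h1 : a < 1) : (a : UnitAddCircle) ≠ 0 := by
  intro h
  rw [AddCircle.coe_eq_zero_iff] at h
  obtain ⟨n, hn⟩ := h
  simp at hn
  have h3 : (0 : ℝ) < n := by linarith
  have h4 : (n : ℝ) < 1 := by linarith
  norm_cast at h3 h4
  omega

lemma mellin_gk {a : ℝ} (h0 : 0 < a) (h1 : a < 1 / 4) {s : ℂ} (hs : 0 < s.re)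
    (hc0 : 0 < Real.cos (2 * Real.pi * a)) (hc1 : Real.cos (2 * Real.pi * a) < 1) :
    mellin (fun t => (gk (Real.cos (2 * Real.pi * a)) t : ℂ)) s = Gamma s * cosZeta a s := by
  have hU : IsOpen {s : ℂ | 0 < s.re} := isOpen_lt continuous_const Complex.continuous_re
  have hf : AnalyticOnNhd ℂ (mellin (fun t => (gk (Real.cos (2 * Real.pi * a)) t : ℂ)))
      {s : ℂ | 0 < s.re} :=
    DifferentiableOn.analyticOnNhd (fun z hz =>
      (gk_deriv hc0 hc1 hz).2.differentiableAt.differentiableWithinAt) hU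
  have hg : AnalyticOnNhd ℂ (fun s => Gamma s * cosZeta a s) {s : ℂ | 0 < s.re} := by
    refine DifferentiableOn.analyticOnNhd (fun z hz => ?_) hU
    refine ((Complex.differentiableAt_Gamma z fun m h => ?_).mul
      (differentiable_cosZeta_of_ne_zero (coe_ne_zero' h0 (by linarith)) z)).differentiableWithinAt
    rw [h] at hz
    simp at hz
    have : (0:ℝ) ≤ m := by positivity
    linarith
  have hpre : IsPreconnected {s : ℂ | 0 < s.re} :=
    (convex_halfSpace_re_gt 0).isPreconnected
  refine hf.eqOn_of_preconnected_of_eventuallyEq hg hpre (z₀ := 2) (by simp) ?_ hs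
  have : {s : ℂ | 1 < s.re} ∈ 𝓝 (2 : ℂ) :=
    (isOpen_lt continuous_const Complex.continuous_re).mem_nhds (by simp)
  filter_upwards [this] with z hz
  exact mellin_gk_of_one_lt hz

lemma mellin_real (f : ℝ → ℝ) (σ : ℝ) :
    mellin (fun t => (f t : ℂ)) (σ : ℂ) = ((∫ t in Set.Ioi (0:ℝ), t ^ (σ - 1) * f t : ℝ) : ℂ) := by
  rw [mellin, ← integral_complex_ofReal]
  refine setIntegral_congr_fun measurableSet_Ioi fun t ht => ?_
  have ht' : (0:ℝ) < t := ht
  simp only [smul_eq_mul]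
  rw [Complex.ofReal_mul, Complex.ofReal_cpow ht'.le]
  push_cast
  rfl

lemma conv_real {f : ℝ → ℝ} {σ : ℝ} (h : MellinConvergent (fun t => (f t : ℂ)) (σ : ℂ)) :
    IntegrableOn (fun t => t ^ (σ - 1) * f t) (Set.Ioi 0) := by
  have h2 : IntegrableOn (fun t : ℝ => ((t : ℂ) ^ ((σ : ℂ) - 1) • (f t : ℂ)).re) (Set.Ioi 0) :=
    MeasureTheory.Integrable.re h
  refine h2.congr_fun (fun t ht => ?_) measurableSet_Ioi
  have ht' : (0:ℝ) < t := ht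
  simp only [smul_eq_mul]
  rw [← Complex.ofReal_one, ← Complex.ofReal_sub, ← Complex.ofReal_cpow ht'.le,
    ← Complex.ofReal_mul, Complex.ofReal_re]

noncomputable def Rk (c σ : ℝ) : ℝ := ∫ t in Set.Ioi (0:ℝ), t ^ (σ - 1) * gk c t

lemma Rk_deriv {c : ℝ} (h0 : 0 < c) (h1 : c < 1) {σ : ℝ} (hs : 0 < σ) :
    ∃ R', HasDerivAt (Rk c) R' σ ∧ 0 < R' - Real.log (-Real.log c) * Rk c σ := by
  obtain ⟨hd1, hd2⟩ := gk_deriv h0 h1 (s := (σ : ℂ)) (by simpa using hs)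
  have hfe : (fun t => Real.log t • (gk c t : ℂ)) = fun t => ((Real.log t * gk c t : ℝ) : ℂ) := by
    ext t; simp
  rw [hfe] at hd1 hd2
  have hc := gk_conv h0 h1 (s := (σ : ℂ)) (by simpa using hs)
  have hi1 := conv_real hd1
  have hi2 := conv_real hc
  have hR := hd2.real_of_complex
  have hRe : (fun x : ℝ => (mellin (fun t => (gk c t : ℂ)) (x : ℂ)).re) = Rk c := by
    ext x; rw [mellin_real, Complex.ofReal_re, Rk]
  rw [hRe, mellin_real, Complex.ofReal_re] at hR
  refine ⟨_, hR, ?_⟩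
  have hlog : Real.log c < 0 := Real.log_neg h0 h1
  set t0 := -Real.log c with ht0
  have ht0p : 0 < t0 := by linarith
  rw [Rk, ← integral_const_mul, ← integral_sub hi1 (hi2.const_mul _)]
  have key : ∀ t : ℝ, 0 < t → t ≠ t0 → 0 < t ^ (σ - 1) * (Real.log t * gk c t) -
      Real.log t0 * (t ^ (σ - 1) * gk c t) := by
    intro t ht hne
    have e : t ^ (σ - 1) * (Real.log t * gk c t) -
      Real.log t0 * (t ^ (σ - 1) * gk c t) = t ^ (σ - 1) * ((Real.log t - Real.log t0) * gk c t) := by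
      ring
    rw [e]
    refine mul_pos (Real.rpow_pos_of_pos ht _) ?_
    have hx : 0 < Real.exp (-t) := Real.exp_pos _
    have hce : c = Real.exp (-t0) := by rw [ht0, neg_neg, Real.exp_log h0]
    have e2 : gk c t = Real.exp (-t) * (c - Real.exp (-t)) /
      (1 - 2 * c * Real.exp (-t) + Real.exp (-t) ^ 2) := by rw [gk]; congr 1; ring
    rw [e2]
    have hden := gk_den_pos h0 h1 (Real.exp (-t))
    rcases lt_or_gt_of_ne hne with hlt | hgt
    · refine mul_pos_of_neg_of_neg (sub_neg.2 (Real.log_lt_log ht hlt)) ?_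
      refine div_neg_of_neg_of_pos (mul_neg_of_pos_of_neg hx ?_) hden
      have : Real.exp (-t0) < Real.exp (-t) := Real.exp_lt_exp.2 (by linarith)
      linarith
    · refine mul_pos (sub_pos.2 (Real.log_lt_log ht0p hgt)) ?_
      refine div_pos (mul_pos hx ?_) hden
      have : Real.exp (-t) < Real.exp (-t0) := Real.exp_lt_exp.2 (by linarith)
      linarith
  rw [setIntegral_pos_iff_support_of_nonneg_ae]
  · refine lt_of_lt_of_le ?_ (measure_mono (s := Set.Ioo 0 t0) ?_)
    · simp [ht0p]
    · intro t ht
      exact ⟨(key t ht.1 ht.2.ne).ne', ht.1⟩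
  · refine (ae_restrict_iff' measurableSet_Ioi).2 (Eventually.of_forall fun t ht => ?_)
    by_cases h : t = t0
    · subst h; simp only [Pi.zero_apply]; apply le_of_eq; ring
    · exact (key t ht h).le
  · exact hi1.sub (hi2.const_mul _)

lemma Rk_one {c : ℝ} (h0 : 0 < c) (h1 : c < 1) : Rk c 1 = -(Real.log (2 - 2 * c) / 2) := by
  have hi := conv_real (gk_conv h0 h1 (s := ((1:ℝ) : ℂ)) (by simp))
  simp only [sub_self, Real.rpow_zero, one_mul] at hi
  simp only [Rk, sub_self, Real.rpow_zero, one_mul]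
  have hT : Tendsto (fun t : ℝ => Real.log (1 - 2 * c * Real.exp (-t) + Real.exp (-t) ^ 2) / 2)
      atTop (𝓝 0) := by
    have hE : Tendsto (fun t : ℝ => Real.exp (-t)) atTop (𝓝 0) :=
      Real.tendsto_exp_neg_atTop_nhds_zero
    have h3 : Tendsto (fun t : ℝ => 1 - 2 * c * Real.exp (-t) + Real.exp (-t) ^ 2) atTop
        (𝓝 (1 - 2 * c * 0 + 0 ^ 2)) := ((hE.const_mul _).const_sub _).add (hE.pow 2)
    have h4 := (h3.log (by norm_num)).div_const 2
    simpa using h4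
  have := integral_Ioi_of_hasDerivAt_of_tendsto' (a := 0) (f' := gk c) (fun t _ => ?_) hi hT
  · rw [this]; norm_num; ring_nf
  · have he : HasDerivAt (fun t : ℝ => Real.exp (-t)) (-Real.exp (-t)) t := by
      simpa using (hasDerivAt_neg t).exp
    have h5 := ((((he.const_mul (2 * c)).const_sub 1).add (he.pow 2)).log
      (gk_den_pos h0 h1 _).ne').div_const 2
    refine h5.congr_deriv ?_
    have hden := (gk_den_pos h0 h1 (Real.exp (-t))).ne'
    simp only [Pi.add_apply, Pi.pow_apply]
    unfold gk
    rw [div_div, div_eq_div_iff (mul_ne_zero hden two_ne_zero) hden]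
    push_cast
    ring

lemma Zf_eq (a : ℝ) (s : ℂ) : Zf a s = 2 * hurwitzZetaEven a s := by
  rw [Zf, hurwitzZetaEven_eq, ← AddCircle.coe_neg]
  have : ((1 - a : ℝ) : UnitAddCircle) = ((-a : ℝ) : UnitAddCircle) := by
    rw [sub_eq_add_neg, AddCircle.coe_add]; simp
  rw [this]; ring

lemma Pf_eq (a : ℝ) (s : ℂ) : Pf a s = 2 * cosZeta a s := by
  rw [Pf, cosZeta_eq, ← AddCircle.coe_neg]
  have : ((1 - a : ℝ) : UnitAddCircle) = ((-a : ℝ) : UnitAddCircle) := by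
    rw [sub_eq_add_neg, AddCircle.coe_add]; simp
  rw [this]; ring

lemma Rk_cosZeta {a : ℝ} (h0 : 0 < a) (h1 : a < 1 / 4)
    (hc0 : 0 < Real.cos (2 * Real.pi * a)) (hc1 : Real.cos (2 * Real.pi * a) < 1)
    {σ : ℝ} (hs : 0 < σ) :
    cosZeta a (σ : ℂ) = ((Rk (Real.cos (2 * Real.pi * a)) σ / Real.Gamma σ : ℝ) : ℂ) := by
  have h := mellin_gk h0 h1 (s := (σ : ℂ)) (by simpa using hs) hc0 hc1
  rw [mellin_real, Complex.Gamma_ofReal] at h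
  have hG : ((Real.Gamma σ : ℝ) : ℂ) ≠ 0 := by
    exact_mod_cast (Real.Gamma_pos_of_pos hs).ne'
  rw [Complex.ofReal_div, eq_div_iff hG, Rk, h, mul_comm]

/-- Strictly increasing normalisation. -/
lemma Rk_mono {c : ℝ} (h0 : 0 < c) (h1 : c < 1) :
    StrictMonoOn (fun σ => Real.exp (-Real.log (-Real.log c) * σ) * Rk c σ) (Set.Ioi 0) := by
  set L := Real.log (-Real.log c) with hL
  have hd : ∀ σ : ℝ, 0 < σ → ∃ D, HasDerivAt (fun σ => Real.exp (-L * σ) * Rk c σ) D σ ∧ 0 < D := by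
    intro σ hσ
    obtain ⟨R', hR, hpos⟩ := Rk_deriv h0 h1 hσ
    have he : HasDerivAt (fun σ : ℝ => Real.exp (-L * σ)) (Real.exp (-L * σ) * -L) σ := by
      simpa using ((hasDerivAt_id σ).const_mul (-L)).exp
    refine ⟨_, he.mul hR, ?_⟩
    have : Real.exp (-L * σ) * -L * Rk c σ + Real.exp (-L * σ) * R' =
      Real.exp (-L * σ) * (R' - L * Rk c σ) := by ring
    rw [this]
    exact mul_pos (Real.exp_pos _) hpos
  refine strictMonoOn_of_deriv_pos (convex_Ioi 0) (fun σ hσ => ?_) (fun σ hσ => ?_)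
  · obtain ⟨D, hD, _⟩ := hd σ hσ
    exact hD.continuousAt.continuousWithinAt
  · rw [interior_Ioi] at hσ
    obtain ⟨D, hD, hp⟩ := hd σ hσ
    rw [hD.deriv]; exact hp

lemma even_cos {a σ : ℝ} (h0 : 0 < a) (h1 : a < 1 / 4) {s : ℂ} (hs : 0 < s.re) :
    hurwitzZetaEven a (1 - s) =
      (2 * (2 * Real.pi) ^ (-s) * Gamma s * cos (Real.pi * s / 2)) * cosZeta a s := by
  refine hurwitzZetaEven_one_sub _ (fun n h => ?_) (Or.inl (coe_ne_zero' h0 (by linarith)))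
  rw [h] at hs
  simp at hs
  have : (0:ℝ) ≤ n := by positivity
  linarith

lemma factor_pos {σ : ℝ} (h0 : 0 < σ) (h1 : σ < 1) : ∃ q : ℝ, 0 < q ∧
    (2 * (2 * Real.pi) ^ (-(σ:ℂ)) * Gamma σ * cos (Real.pi * σ / 2) : ℂ) = (q : ℂ) := by
  refine ⟨2 * (2 * Real.pi) ^ (-σ) * Real.Gamma σ * Real.cos (Real.pi * σ / 2), ?_, ?_⟩
  · have hpi := Real.pi_pos
    have : 0 < Real.cos (Real.pi * σ / 2) :=
      Real.cos_pos_of_mem_Ioo ⟨by nlinarith, by nlinarith⟩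
    have := Real.Gamma_pos_of_pos h0
    positivity
  · rw [Complex.Gamma_ofReal]
    push_cast
    rw [Complex.ofReal_cpow (by positivity)]
    push_cast
    rfl

lemma cos_facts {a : ℝ} (h0 : 0 < a) (h1 : a < 1 / 4) :
    0 < Real.cos (2 * Real.pi * a) ∧ Real.cos (2 * Real.pi * a) < 1 := by
  have hpi := Real.pi_pos
  constructor
  · exact Real.cos_pos_of_mem_Ioo ⟨by nlinarith, by nlinarith⟩
  · rw [← Real.cos_zero]
    exact Real.cos_lt_cos_of_nonneg_of_le_pi (le_refl _) (by nlinarith) (by positivity)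

lemma Zf_real {a : ℝ} (h0 : 0 < a) (h1 : a < 1 / 4) {σ : ℝ} (hs0 : 0 < σ) (hs1 : σ < 1) :
    ∃ q : ℝ, 0 < q ∧ Zf a σ = q * Pf a ((1 - σ : ℝ) : ℂ) := by
  obtain ⟨q, hq, he⟩ := factor_pos (σ := 1 - σ) (by linarith) (by linarith)
  refine ⟨q, hq, ?_⟩
  have h := even_cos (σ := σ) h0 h1 (s := ((1 - σ : ℝ) : ℂ)) (by simpa using hs1)
  rw [he] at h
  have e : (1 : ℂ) - ((1 - σ : ℝ) : ℂ) = σ := by push_cast; ring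
  rw [e] at h
  rw [Zf_eq, Pf_eq, h]; ring

lemma Pf_simple {a : ℝ} (h0 : 0 < a) (h1 : a < 1 / 4) {β : ℝ} (hβ : 0 < β)
    (hz : Pf a β = 0) : deriv (Pf a) β ≠ 0 := by
  obtain ⟨hc0, hc1⟩ := cos_facts h0 h1
  have hPe : Pf a = fun s => 2 * cosZeta a s := funext (Pf_eq a)
  have hdiff := differentiable_cosZeta_of_ne_zero (coe_ne_zero' h0 (by linarith : a < 1))
  have hP : DifferentiableAt ℂ (Pf a) β := by
    rw [hPe]; exact (hdiff _).const_mul 2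
  have hd := hP.hasDerivAt.real_of_complex
  intro h
  rw [h, Complex.zero_re] at hd
  set c := Real.cos (2 * Real.pi * a) with hc
  have hR0 : Rk c β = 0 := by
    rw [Pf_eq, Rk_cosZeta h0 h1 hc0 hc1 hβ] at hz
    have := (Real.Gamma_pos_of_pos hβ).ne'
    have h3 : Rk c β / Real.Gamma β = 0 := by simpa [-Complex.ofReal_div] using hz
    simpa [this] using h3
  have hG : HasDerivAt Real.Gamma (deriv Real.Gamma β) β :=
    (Real.differentiableAt_Gamma fun m hm => by
      have : (0:ℝ) ≤ m := by positivity
      linarith).hasDerivAt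
  have hm := hG.mul hd
  obtain ⟨R', hR, hpos⟩ := Rk_deriv hc0 hc1 hβ
  have hev : (fun x : ℝ => 2 * Rk c x) =ᶠ[𝓝 β] (Real.Gamma * fun x : ℝ => (Pf a x).re) := by
    filter_upwards [lt_mem_nhds hβ] with x hx
    rw [Pi.mul_apply, Pf_eq, Rk_cosZeta h0 h1 hc0 hc1 hx, ← Complex.ofReal_ofNat,
      ← Complex.ofReal_mul, Complex.ofReal_re]
    have := (Real.Gamma_pos_of_pos hx).ne'
    field_simp
    rfl
  have h2 := (hR.const_mul 2).unique (hm.congr_of_eventuallyEq hev)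
  rw [hz] at h2
  simp at h2
  rw [h2, hR0] at hpos
  simp at hpos

lemma Zf_simple {a : ℝ} (h0 : 0 < a) (h1 : a < 1 / 4) {β : ℝ} (hβ : 0 < β) (hβ1 : β < 1)
    (hz : Pf a β = 0) : deriv (Zf a) ((1 - β : ℝ) : ℂ) ≠ 0 := by
  have hPs := Pf_simple h0 h1 hβ hz
  have hP : DifferentiableAt ℂ (Pf a) β := by
    by_contra h; exact hPs (deriv_zero_of_not_differentiableAt h)
  obtain ⟨q, hq, he⟩ := factor_pos hβ hβ1
  set Q : ℂ → ℂ := fun s => 2 * (2 * Real.pi) ^ (-s) * Gamma s * cos (Real.pi * s / 2) with hQ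
  have hQd : DifferentiableAt ℂ Q β := by
    have hG : DifferentiableAt ℂ Gamma (β : ℂ) :=
      Complex.differentiableAt_Gamma _ fun m hm => by
        have h3 : β = -m := by exact_mod_cast hm
        have : (0:ℝ) ≤ m := by positivity
        linarith
    have hpw : DifferentiableAt ℂ (fun s : ℂ => (2 * Real.pi : ℂ) ^ (-s)) β :=
      (differentiableAt_id.neg).const_cpow (Or.inl (by simp [Real.pi_ne_zero]))
    have hcs : DifferentiableAt ℂ (fun s : ℂ => cos (Real.pi * s / 2)) β := by fun_prop
    exact ((hpw.const_mul 2).mul hG).mul hcs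
  have hm := hQd.hasDerivAt.mul hP.hasDerivAt
  rw [hz, mul_zero, zero_add] at hm
  have hev : (fun s : ℂ => Zf a (1 - s)) =ᶠ[𝓝 (β : ℂ)] Q * Pf a := by
    have : {s : ℂ | 0 < s.re} ∈ 𝓝 (β : ℂ) :=
      (isOpen_lt continuous_const Complex.continuous_re).mem_nhds (by simpa using hβ)
    filter_upwards [this] with s hs
    rw [Pi.mul_apply, Zf_eq, even_cos (σ := β) h0 h1 hs, Pf_eq]
    ring
  have hZ1 := hm.congr_of_eventuallyEq hev
  have h2 := hZ1.deriv
  rw [deriv_comp_const_sub] at h2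
  have e : ((1 - β : ℝ) : ℂ) = 1 - (β : ℂ) := by push_cast; ring
  rw [e]
  intro h
  rw [h, neg_zero] at h2
  have hq0 : Q β ≠ 0 := by
    show (2 * (2 * Real.pi) ^ (-(β:ℂ)) * Gamma β * cos (Real.pi * β / 2) : ℂ) ≠ 0
    rw [he]; exact_mod_cast hq.ne'
  exact mul_ne_zero hq0 hPs h2.symm

lemma Pf_real {a : ℝ} (h0 : 0 < a) (h1 : a < 1 / 4) {σ : ℝ} (hs : 0 < σ) :
    Pf a σ = ((2 * (Rk (Real.cos (2 * Real.pi * a)) σ / Real.Gamma σ) : ℝ) : ℂ) := by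
  obtain ⟨hc0, hc1⟩ := cos_facts h0 h1
  rw [Pf_eq, Rk_cosZeta h0 h1 hc0 hc1 hs, Complex.ofReal_mul, Complex.ofReal_ofNat]

lemma cos_third : Real.cos (2 * Real.pi * (1 / 6)) = 1 / 2 := by
  rw [← Real.cos_pi_div_three]; congr 1; ring

lemma Pf_neg {a : ℝ} (h0 : 1 / 6 < a) (h1 : a < 1 / 4) {σ : ℝ} (hs : 0 < σ) (hs1 : σ < 1) :
    (Pf a σ).re < 0 := by
  have ha : 0 < a := by linarith
  have hpi := Real.pi_pos
  obtain ⟨hc0, hc1⟩ := cos_facts ha h1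
  have hc : Real.cos (2 * Real.pi * a) < 1 / 2 := by
    rw [← cos_third]
    exact Real.cos_lt_cos_of_nonneg_of_le_pi (by positivity) (by nlinarith) (by nlinarith)
  rw [Pf_real ha h1 hs, Complex.ofReal_re]
  have hR1 : Rk (Real.cos (2 * Real.pi * a)) 1 < 0 := by
    rw [Rk_one hc0 hc1]
    have := Real.log_pos (by linarith : 1 < 2 - 2 * Real.cos (2 * Real.pi * a))
    linarith
  have hm := Rk_mono hc0 hc1 (Set.mem_Ioi.2 hs) (Set.mem_Ioi.2 one_pos) hs1
  have hm2 := hm.trans (mul_neg_of_pos_of_neg (Real.exp_pos _) hR1)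
  have hR : Rk (Real.cos (2 * Real.pi * a)) σ < 0 := by
    by_contra hcon
    exact absurd hm2 (not_lt.2 (mul_nonneg (Real.exp_pos _).le (not_lt.1 hcon)))
  have := div_neg_of_neg_of_pos hR (Real.Gamma_pos_of_pos hs)
  linarith

lemma Pf_unique {a : ℝ} (h0 : 0 < a) (h1 : a < 1 / 4) {σ τ : ℝ} (hs : 0 < σ) (ht : 0 < τ)
    (hσ : Pf a σ = 0) (hτ : Pf a τ = 0) : σ = τ := by
  obtain ⟨hc0, hc1⟩ := cos_facts h0 h1
  have key : ∀ x : ℝ, 0 < x → Pf a x = 0 → Rk (Real.cos (2 * Real.pi * a)) x = 0 := by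
    intro x hx h
    rw [Pf_real h0 h1 hx, Complex.ofReal_eq_zero] at h
    have := (Real.Gamma_pos_of_pos hx).ne'
    simpa [this] using h
  refine (Rk_mono hc0 hc1).injOn (Set.mem_Ioi.2 hs) (Set.mem_Ioi.2 ht) ?_
  simp only [key σ hs hσ, key τ ht hτ]
  simp

lemma Pf_exists {a : ℝ} (h0 : 0 < a) (h1 : a < 1 / 6) :
    ∃ β ∈ Set.Ioo (0:ℝ) 1, Pf a β = 0 := by
  have ha : a < 1 / 4 := by linarith
  have hpi := Real.pi_pos
  obtain ⟨hc0, hc1⟩ := cos_facts h0 ha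
  have hc : 1 / 2 < Real.cos (2 * Real.pi * a) := by
    rw [← cos_third]
    exact Real.cos_lt_cos_of_nonneg_of_le_pi (by positivity) (by nlinarith) (by nlinarith)
  have hPe : Pf a = fun s => 2 * cosZeta a s := funext (Pf_eq a)
  have hdiff := differentiable_cosZeta_of_ne_zero (coe_ne_zero' h0 (by linarith : a < 1))
  have hcont : Continuous (fun x : ℝ => (Pf a x).re) := by
    rw [hPe]
    exact Complex.continuous_re.comp
      ((continuous_const.mul hdiff.continuous).comp Complex.continuous_ofReal)
  have hz : (Pf a ((0:ℝ) : ℂ)).re < 0 := by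
    rw [Pf_eq, Complex.ofReal_zero, cosZeta_apply_zero]
    norm_num
  have ho : 0 < (Pf a ((1:ℝ) : ℂ)).re := by
    rw [Pf_real h0 ha one_pos, Complex.ofReal_re, Rk_one hc0 hc1, Real.Gamma_one]
    have := Real.log_neg (by linarith : 0 < 2 - 2 * Real.cos (2 * Real.pi * a)) (by linarith)
    linarith
  obtain ⟨β, hβ, h⟩ := intermediate_value_Ioo (zero_le_one (α := ℝ)) hcont.continuousOn
    (Set.mem_Ioo.2 ⟨hz, ho⟩)
  refine ⟨β, hβ, ?_⟩
  simp only at h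
  rw [Pf_real h0 ha hβ.1] at h ⊢
  rw [Complex.ofReal_re] at h
  rw [h, Complex.ofReal_zero]

/-- (1) for `1/6 < a < 1/4` and `0 < σ < 1`, `Z(σ,a) < 0` and `P(σ,a) < 0`;
(2) for `0 < a < 1/6`, each of `Z(·,a)` and `P(·,a)` has exactly one zero in `(0,1)`, both
zeros are simple, and they satisfy `β_Z(a) = 1 − β_P(a)`. -/
theorem Z_P_zeros_in_unit_interval :
    (∀ a : ℝ, 1 / 6 < a → a < 1 / 4 → ∀ σ : ℝ, 0 < σ → σ < 1 →
      (Zf a (σ : ℂ)).re < 0 ∧ (Pf a (σ : ℂ)).re < 0) ∧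
    (∀ a : ℝ, 0 < a → a < 1 / 6 →
      ∃ βZ βP : ℝ, βZ ∈ Set.Ioo (0 : ℝ) 1 ∧ βP ∈ Set.Ioo (0 : ℝ) 1 ∧
        Zf a (βZ : ℂ) = 0 ∧ deriv (Zf a) (βZ : ℂ) ≠ 0 ∧
        (∀ σ ∈ Set.Ioo (0 : ℝ) 1, Zf a (σ : ℂ) = 0 → σ = βZ) ∧
        Pf a (βP : ℂ) = 0 ∧ deriv (Pf a) (βP : ℂ) ≠ 0 ∧
        (∀ σ ∈ Set.Ioo (0 : ℝ) 1, Pf a (σ : ℂ) = 0 → σ = βP) ∧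
        βZ = 1 - βP) := by
  constructor
  · intro a h0 h1 σ hs0 hs1
    refine ⟨?_, Pf_neg h0 h1 hs0 hs1⟩
    obtain ⟨q, hq, he⟩ := Zf_real (by linarith : 0 < a) h1 hs0 hs1
    rw [he, Complex.re_ofReal_mul]
    exact mul_neg_of_pos_of_neg hq (Pf_neg h0 h1 (by linarith) (by linarith))
  · intro a h0 h1
    have ha : a < 1 / 4 := by linarith
    obtain ⟨β, hβ, hz⟩ := Pf_exists h0 h1
    have hb1 : 0 < 1 - β := by linarith [hβ.2]
    have hb2 : 1 - β < 1 := by linarith [hβ.1]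
    refine ⟨1 - β, β, ⟨hb1, hb2⟩, hβ, ?_, Zf_simple h0 ha hβ.1 hβ.2 hz, ?_, hz,
      Pf_simple h0 ha hβ.1 hz, fun σ hσ h => Pf_unique h0 ha hσ.1 hβ.1 h hz, rfl⟩
    · obtain ⟨q, hq, he⟩ := Zf_real h0 ha hb1 hb2
      rw [he, sub_sub_cancel, hz, mul_zero]
    · intro σ hσ h
      obtain ⟨q, hq, he⟩ := Zf_real h0 ha hσ.1 hσ.2
      rw [he] at h
      have hq' : (q : ℂ) ≠ 0 := by exact_mod_cast hq.ne'
      have h2 := (mul_eq_zero.1 h).resolve_left hq'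
      have := Pf_unique h0 ha (by linarith [hσ.2]) hβ.1 h2 hz
      linarith
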